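/- Let γ ∈ (0, 1/2) and ρ ∈ (0,1), and set I = ∫_0^1 x^{−2γ} (1−ρ)^{(1/(1−γ) − 1 + γ)·x^{−γ}} dx. If log(1/(1−ρ)) > −log(1 − 2γ)/(1/(1−γ) − 1 + γ), then I < 1. -/

import Mathlib

noncomputable section

/-- `I = ∫_0^1 x^{−2γ} (1−ρ)^{(1/(1−γ) − 1 + γ)·x^{−γ}} dx`. -/
def snrIntegral (γ ρ : ℝ) : ℝ :=
  ∫ x in Set.Ioc (0 : ℝ) 1,
    x ^ (-(2 * γ)) * (1 - ρ) ^ ((1 / (1 - γ) - 1 + γ) * x ^ (-γ))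

/-- For `γ ∈ (0,1/2)` and `ρ ∈ (0,1)`, if
`log(1/(1−ρ)) > −log(1−2γ)/(1/(1−γ) − 1 + γ)` then `I < 1`. -/
theorem snrIntegral_lt_one_second_criterion
    (γ ρ : ℝ) (hγ : γ ∈ Set.Ioo (0 : ℝ) (1 / 2)) (hρ : ρ ∈ Set.Ioo (0 : ℝ) 1)
    (h : -Real.log (1 - 2 * γ) / (1 / (1 - γ) - 1 + γ) < Real.log (1 / (1 - ρ))) :
    snrIntegral γ ρ < 1 := by
  obtain ⟨hg0, hg1⟩ := hγ
  obtain ⟨hr0, hr1⟩ := hρ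
  unfold snrIntegral
  have hc : 0 < 1 / (1 - γ) - 1 + γ := by
    have : 1 ≤ 1 / (1 - γ) := by
      rw [le_div_iff₀ (by linarith)]; linarith
    linarith
  generalize 1 / (1 - γ) - 1 + γ = c at h hc ⊢
  have hq : 0 < 1 - ρ := by linarith
  have hd : 0 < 1 - 2 * γ := by linarith
  have hlt : (1 - ρ) ^ c < 1 - 2 * γ := by
    rw [← Real.log_lt_log_iff (Real.rpow_pos_of_pos hq c) hd, Real.log_rpow hq]
    rw [div_lt_iff₀ hc, one_div, Real.log_inv] at h
    linarith
  have hint : MeasureTheory.IntegrableOn (fun x : ℝ => x ^ (-(2 * γ))) (Set.Ioc 0 1) := by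
    have := intervalIntegral.intervalIntegrable_rpow' (a := 0) (b := 1)
      (r := -(2 * γ)) (by linarith)
    exact (intervalIntegrable_iff_integrableOn_Ioc_of_le zero_le_one).1 this
  have hval : ∫ x in Set.Ioc (0 : ℝ) 1, x ^ (-(2 * γ)) = 1 / (1 - 2 * γ) := by
    rw [← intervalIntegral.integral_of_le zero_le_one, integral_rpow (Or.inl (by linarith)),
      Real.one_rpow, Real.zero_rpow (by linarith), sub_zero]
    congr 1; ring
  calc _ ≤ ∫ x in Set.Ioc (0 : ℝ) 1, x ^ (-(2 * γ)) * (1 - ρ) ^ c := by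
        apply MeasureTheory.integral_mono_of_nonneg
        · filter_upwards [MeasureTheory.ae_restrict_mem measurableSet_Ioc] with x hx
          have := hx.1
          simp only [Pi.zero_apply]
          positivity
        · exact hint.mul_const _
        · filter_upwards [MeasureTheory.ae_restrict_mem measurableSet_Ioc] with x hx
          have h1 : 1 ≤ x ^ (-γ) :=
            Real.one_le_rpow_of_pos_of_le_one_of_nonpos hx.1 hx.2 (by linarith)
          have h2 : (1 - ρ) ^ (c * x ^ (-γ)) ≤ (1 - ρ) ^ c :=
            Real.rpow_le_rpow_of_exponent_ge hq (by linarith) (by nlinarith)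
          exact mul_le_mul_of_nonneg_left h2 (Real.rpow_nonneg hx.1.le _)
    _ = 1 / (1 - 2 * γ) * (1 - ρ) ^ c := by
        rw [MeasureTheory.integral_mul_const, hval]
    _ < 1 := by
        rw [one_div, inv_mul_lt_iff₀ hd]; linarith
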